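/- Av(Always-k; N, M) ≤ (M/k) · Av(Deterministic; N, M): fix M ≥ 1 and k ≥ 1 with k dividing M, and a configuration c : ℤ×ℤ → ℤ with nonnegative values. If S is a legal stabilising toppling sequence for amount M and threshold 4M from c, and T is a legal stabilising toppling sequence for amount k and threshold 4M from c, then for every vertex v, the occurrence count of v in T is at most (M/k) times the occurrence count of v in S; in particular the length of T is at most (M/k) times the length of S. -/

import Mathlib

/-- Configurations: finitely supported functions on `ℤ × ℤ` with integer values. -/
abbrev Config := (ℤ × ℤ) →₀ ℤ

/-- The four neighbours of a vertex `v = (x, y)` in `ℤ × ℤ`. -/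
def nbrs (v : ℤ × ℤ) : Finset (ℤ × ℤ) :=
  {(v.1 + 1, v.2), (v.1 - 1, v.2), (v.1, v.2 + 1), (v.1, v.2 - 1)}

/-- The amount-`k` toppling at `v`: `c − 4k·𝟙_v + k·Σ_{w∼v} 𝟙_w`. -/
noncomputable def topp (k : ℤ) (v : ℤ × ℤ) (c : Config) : Config :=
  c - Finsupp.single v (4 * k) + ∑ w ∈ nbrs v, Finsupp.single w k


/-- Applying the amount-`k` topplings along a list `S = (v₁, …, vₙ)`:
`Topp_k(vₙ) ∘ ⋯ ∘ Topp_k(v₁)`. -/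
noncomputable def toppList (k : ℤ) (S : List (ℤ × ℤ)) (c : Config) : Config :=
  S.foldl (fun c v => topp k v c) c

/-- `S` is a legal toppling sequence (amount `k`, threshold `T`) from `c`:
each toppled vertex is unstable at the time it topples. -/
def legal (k T : ℤ) : List (ℤ × ℤ) → Config → Prop
  | [], _ => True
  | v :: S, c => T ≤ c v ∧ legal k T S (topp k v c)

/-- `c` is stable for threshold `T`: every vertex has value `< T`. -/
def stable (T : ℤ) (c : Config) : Prop := ∀ v, c v < T

/-!
Least action principle: a legal toppling sequence topples no vertex more often than any nonnegative
toppling function that stabilises the configuration. Its first vertex is unstable, and a function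
that never topples that vertex can only raise its value, so the stabilising function topples it at
least once; cancel this toppling on both sides and induct. Toppling once by the amount `M` has the
same effect as toppling `M / k` times by `k`, so `M / k` times the odometer of a stabilising
sequence for `M` is a stabilising function for `k`.
-/

/-- The graph Laplacian of the square lattice, `Δ u v = ∑_{w ∼ v} u w - 4 * u v`. Toppling each
vertex `v` by the amount `k` exactly `u v` times, in any order, adds `k • Δ u` to a
configuration. -/
def latticeLaplacian : (ℤ × ℤ → ℤ) →ₗ[ℤ] (ℤ × ℤ → ℤ) where
  toFun u v := ∑ w ∈ nbrs v, u w - 4 * u v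
  map_add' u u' := by
    ext v
    simp only [Pi.add_apply, Finset.sum_add_distrib]
    ring
  map_smul' a u := by
    ext v
    simp only [Pi.smul_apply, smul_eq_mul, ← Finset.mul_sum, RingHom.id_apply]
    ring

/-- The odometer of a toppling sequence: the number of topplings at each vertex. It is
integer-valued so that the lattice Laplacian applies to it. -/
def odometer (S : List (ℤ × ℤ)) (v : ℤ × ℤ) : ℤ := S.count v

theorem mem_nbrs_comm {v w : ℤ × ℤ} : w ∈ nbrs v ↔ v ∈ nbrs w := by
  simp only [nbrs, Finset.mem_insert, Finset.mem_singleton, Prod.ext_iff]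
  omega

theorem latticeLaplacian_apply (u : ℤ × ℤ → ℤ) (v : ℤ × ℤ) :
    latticeLaplacian u v = ∑ w ∈ nbrs v, u w - 4 * u v :=
  rfl

theorem odometer_nil : odometer [] = 0 := by
  ext v
  simp [odometer]

theorem odometer_cons (v : ℤ × ℤ) (S : List (ℤ × ℤ)) :
    odometer (v :: S) = odometer S + Pi.single v 1 := by
  ext w
  by_cases hvw : v = w
  · simp [odometer, hvw]
  · simp [odometer, hvw, Ne.symm hvw]

theorem odometer_nonneg (S : List (ℤ × ℤ)) : 0 ≤ odometer S := fun v =>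
  Int.natCast_nonneg (S.count v)

theorem topp_apply (k : ℤ) (v : ℤ × ℤ) (c : Config) (w : ℤ × ℤ) :
    topp k v c w = c w + k * latticeLaplacian (Pi.single v 1) w := by
  have neighbour_sum : (∑ x ∈ nbrs v, Finsupp.single x k) w = if v ∈ nbrs w then k else 0 := by
    simp [Finsupp.finsetSum_apply, Finsupp.single_apply, mem_nbrs_comm (v := v)]
  simp only [topp, Finsupp.add_apply, Finsupp.sub_apply, neighbour_sum, Finsupp.single_apply,
    latticeLaplacian_apply, Pi.single_apply, Finset.sum_ite_eq', eq_comm (a := w)]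
  split_ifs <;> ring

theorem toppList_apply (k : ℤ) (S : List (ℤ × ℤ)) (c : Config) (w : ℤ × ℤ) :
    toppList k S c w = c w + k * latticeLaplacian (odometer S) w := by
  induction S generalizing c with
  | nil => simp [toppList, odometer_nil]
  | cons v S ih =>
    calc toppList k (v :: S) c w
        = topp k v c w + k * latticeLaplacian (odometer S) w := ih (topp k v c)
      _ = c w + k * latticeLaplacian (odometer (v :: S)) w := by
        rw [topp_apply, odometer_cons, map_add, Pi.add_apply]
        ring

theorem latticeLaplacian_nonneg_of_apply_eq_zero {u : ℤ × ℤ → ℤ} (hu : 0 ≤ u) {v : ℤ × ℤ}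
    (hv : u v = 0) : 0 ≤ latticeLaplacian u v := by
  rw [latticeLaplacian_apply, hv, mul_zero, sub_zero]
  exact Finset.sum_nonneg fun w _ => hu w

theorem odometer_le_of_legal {k t : ℤ} (hk : 0 ≤ k) {c : Config} {T : List (ℤ × ℤ)}
    (hT : legal k t T c) {u : ℤ × ℤ → ℤ} (hu : 0 ≤ u)
    (hstab : ∀ v, c v + k * latticeLaplacian u v < t) : odometer T ≤ u := by
  induction T generalizing c u with
  | nil => rwa [odometer_nil]
  | cons a T ih =>
    obtain ⟨ha, hT⟩ := hT
    have hua : u a ≠ 0 := fun h0 => by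
      have hraise : 0 ≤ k * latticeLaplacian u a :=
        mul_nonneg hk (latticeLaplacian_nonneg_of_apply_eq_zero hu h0)
      linarith [hstab a]
    have hsingle : Pi.single a 1 ≤ u := by
      intro x
      rcases eq_or_ne x a with rfl | hx
      · simpa using Int.add_one_le_of_lt (lt_of_le_of_ne (hu x) hua.symm)
      · simpa [hx] using hu x
    have hstab' : ∀ v, topp k a c v + k * latticeLaplacian (u - Pi.single a 1) v < t := by
      intro v
      rw [topp_apply, map_sub, Pi.sub_apply]
      linarith [hstab v]
    rw [odometer_cons]
    exact le_sub_iff_add_le.mp (ih hT (sub_nonneg.mpr hsingle) hstab')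

theorem length_le_mul_length_of_count_le {α : Type*} [BEq α] [LawfulBEq α] {n : ℕ}
    {L L' : List α} (h : ∀ a, L.count a ≤ n * L'.count a) : L.length ≤ n * L'.length := by
  have hsub : L.Subperm (List.replicate n L').flatten :=
    List.subperm_ext_iff.mpr fun a _ => by simpa [List.count_flatten] using h a
  simpa using hsub.length_le

theorem alwaysk_le_deterministic_general {k t : ℤ} (hk : 0 ≤ k) (m : ℕ) {c : Config}
    {S T : List (ℤ × ℤ)} (hS : stable t (toppList (k * m) S c)) (hT : legal k t T c) :
    (∀ v, T.count v ≤ m * S.count v) ∧ T.length ≤ m * S.length := by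
  have hstab : ∀ v, c v + k * latticeLaplacian ((m : ℤ) • odometer S) v < t := fun v => by
    rw [map_smul, Pi.smul_apply, smul_eq_mul, ← mul_assoc, ← toppList_apply]
    exact hS v
  have hodometer : odometer T ≤ (m : ℤ) • odometer S :=
    odometer_le_of_legal hk hT (smul_nonneg (Int.natCast_nonneg m) (odometer_nonneg S)) hstab
  have hcount : ∀ v, T.count v ≤ m * S.count v := fun v => by
    have hv : (T.count v : ℤ) ≤ m * S.count v := hodometer v
    exact_mod_cast hv
  exact ⟨hcount, length_le_mul_length_of_count_le hcount⟩

/-- `Av(Always-k; N, M) ≤ (M/k) · Av(Deterministic; N, M)`, locally at each vertex: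
if `S` is a legal stabilising sequence for amount `M`, threshold `4M` from a nonnegative
configuration `c`, and `T` is a legal stabilising sequence for amount `k`, threshold `4M`
from `c` (where `k ∣ M`), then each vertex occurs in `T` at most `M/k` times as often as
in `S`; in particular the length of `T` is at most `M/k` times the length of `S`. -/
theorem alwaysk_le_deterministic (M k : ℕ) (hM : 1 ≤ M) (hk : 1 ≤ k) (hdvd : k ∣ M)
    (c : Config) (hc : ∀ v, 0 ≤ c v) (S T : List (ℤ × ℤ))
    (hS : legal (M : ℤ) (4 * M) S c) (hSstab : stable (4 * M) (toppList (M : ℤ) S c))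
    (hT : legal (k : ℤ) (4 * M) T c) (hTstab : stable (4 * M) (toppList (k : ℤ) T c)) :
    (∀ v : ℤ × ℤ, T.count v ≤ (M / k) * S.count v) ∧
      T.length ≤ (M / k) * S.length := by
  obtain ⟨m, rfl⟩ := hdvd
  rw [Nat.mul_div_cancel_left m hk]
  exact alwaysk_le_deterministic_general (Int.natCast_nonneg k) m (by simpa using hSstab) hT
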